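/- arXiv:1710.03635 — 3 statements merged into one kernel-verified Lean document; each statement's English description precedes it below -/
import Mathlib

section
/- Let p be a prime and let k₁ ⊆ k₂ be an extension of fields of characteristic p such that the algebraic closure of k₁ in k₂ is a separable extension of k₁. Write F₁ = k₁((t)) ⊆ F₂ = k₂((t)). Let α ∈ k₂ be an element that is transcendental over k₁, and set E := F₂[Y]/(Y^p − Y − α·t^{−1}). Then E is a Galois field extension of F₂ of degree p, and E is not induced by any degree p field extension of F₁: there is no field extension E₁ of F₁ with [E₁ : F₁] = p such that E₁ ⊗_{F₁} F₂ is isomorphic to E as an F₂-algebra. -/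
open Polynomial

open scoped TensorProduct

attribute [local instance] Algebra.TensorProduct.rightAlgebra

/-- The ring homomorphism `k₁((t)) →+* k₂((t))` applying a ring homomorphism
`f : k₁ →+* k₂` to each coefficient of a Laurent series. -/
noncomputable def lsMap {R S : Type*} [CommRing R] [CommRing S]
    (f : R →+* S) : LaurentSeries R →+* LaurentSeries S where
  toFun x := x.map f
  map_one' := by ext g; by_cases h : g = 0 <;> simp [h]
  map_mul' x y := HahnSeries.map_mul f.toNonUnitalRingHom
  map_zero' := by ext g; simp
  map_add' x y := HahnSeries.map_add f.toAddMonoidHom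


section Helpers

theorem as_natCast_inj {R : Type*} [CommRing R] [IsDomain R] (p : ℕ) [CharP R p] (c : R) :
    Set.InjOn (fun n : ℕ => c + (n : R)) (Finset.range p : Set ℕ) := by
  intro a ha b hb h
  have h' : (a : R) = (b : R) := by simpa using h
  have := (CharP.natCast_eq_natCast R p).1 h'
  simp only [Finset.coe_range, Set.mem_Iio] at ha hb
  exact Nat.ModEq.eq_of_lt_of_lt this ha hb

theorem as_card {R : Type*} [CommRing R] [IsDomain R] [DecidableEq R]
    (p : ℕ) [CharP R p] (c : R) :
    ((Finset.range p).image (fun n : ℕ => c + (n : R))).card = p := by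
  rw [Finset.card_image_of_injOn (as_natCast_inj p c), Finset.card_range]

theorem as_nat_pow {R : Type*} [CommRing R] (p : ℕ) [Fact p.Prime] [CharP R p] (n : ℕ) :
    (n : R) ^ p = n := by
  rw [← frobenius_def]
  exact map_natCast (frobenius R p) n

theorem as_fixed {R : Type*} [Field R] (p : ℕ) [hp : Fact p.Prime] [CharP R p]
    (x : R) (hx : x ^ p = x) : ∃ n : ℕ, x = n := by
  classical
  by_contra! hne
  have key : (X ^ p - X : R[X]) = 0 := by
    apply eq_zero_of_natDegree_lt_card_of_eval_eq_zero' _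
      (insert x ((Finset.range p).image (fun n : ℕ => (0 : R) + (n : R))))
    · intro i hi
      simp only [zero_add, Finset.mem_insert, Finset.mem_image] at hi
      rcases hi with rfl | ⟨n, -, rfl⟩
      · simp [hx]
      · simp [as_nat_pow p n]
    · rw [Finset.card_insert_of_notMem, as_card,
        FiniteField.X_pow_card_sub_X_natDegree_eq R hp.out.one_lt]
      · simp
      · simp only [zero_add, Finset.mem_image, not_exists, not_and]
        intro n _ h
        exact hne n h.symm
  exact FiniteField.X_pow_card_sub_X_ne_zero R hp.out.one_lt key

set_option linter.unusedSectionVars false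

variable {L : Type*} [Field L] (p : ℕ) [hp : Fact p.Prime] [CharP L p] (a : L)

theorem as_natDegree : (X ^ p - X - C a : L[X]).natDegree = p := by
  rw [natDegree_sub_C, FiniteField.X_pow_card_sub_X_natDegree_eq L hp.out.one_lt]

theorem as_monic : (X ^ p - X - C a : L[X]).Monic := by
  rw [sub_sub]
  apply monic_X_pow_sub
  rw [degree_X_add_C]
  exact_mod_cast hp.out.one_lt

theorem as_irreducible (h : ∀ b : L, b ^ p - b ≠ a) : Irreducible (X ^ p - X - C a : L[X]) := by
  have hne : (X ^ p - X - C a : L[X]) ≠ 0 := (as_monic p a).ne_zero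
  obtain ⟨q, hqm, hq, hqf⟩ := Polynomial.exists_monic_irreducible_factor (X ^ p - X - C a : L[X])
    (by
      intro hu
      have := natDegree_eq_zero_of_isUnit hu
      rw [as_natDegree] at this
      exact hp.out.ne_zero this)
  let M := AlgebraicClosure L
  have : CharP M p := charP_of_injective_algebraMap (algebraMap L M).injective p
  have hroot : ∀ y ∈ (q.map (algebraMap L M)).roots, y ^ p - y = algebraMap L M a := by
    intro y hy
    have h1 := (mem_roots'.1 hy).2
    have h2 : IsRoot ((X ^ p - X - C a : L[X]).map (algebraMap L M)) y :=
      h1.dvd (Polynomial.map_dvd _ hqf)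
    simpa [sub_eq_zero] using h2
  have hs : Splits (q.map (algebraMap L M)) := IsAlgClosed.splits _
  have hc : (q.map (algebraMap L M)).roots.card = q.natDegree := by
    rw [← hs.natDegree_eq_card_roots, natDegree_map]
  have hsum := hs.nextCoeff_eq_neg_sum_roots_of_monic (hqm.map _)
  rw [nextCoeff_map_eq] at hsum
  have hdpos : 0 < q.natDegree := hq.natDegree_pos
  obtain ⟨y, hy⟩ := Multiset.card_pos_iff_exists_mem.1 (hc ▸ hdpos)
  have hy' := hroot y hy
  have hdiff : ∀ s : Multiset M, (∀ z ∈ s, z ^ p - z = algebraMap L M a) →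
      ∃ n : ℕ, s.sum = s.card * y + n := by
    intro s
    induction s using Multiset.induction with
    | empty => intro _; exact ⟨0, by simp⟩
    | cons z s ih =>
      intro hz
      obtain ⟨n, hn⟩ := ih (fun w hw => hz w (Multiset.mem_cons_of_mem hw))
      have hz' := hz z (Multiset.mem_cons_self z s)
      obtain ⟨m, hm⟩ := as_fixed p (z - y) (by
        rw [sub_pow_char]; linear_combination hz' - hy')
      refine ⟨n + m, ?_⟩
      simp only [Multiset.sum_cons, Multiset.card_cons, hn]
      push_cast
      linear_combination hm
  obtain ⟨n, hn⟩ := hdiff _ hroot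
  rw [hn, hc] at hsum
  have hle : q.natDegree ≤ p := by
    have := natDegree_le_of_dvd hqf hne
    rwa [as_natDegree] at this
  rcases hle.lt_or_eq with hlt | heq
  · exfalso
    have hd : (q.natDegree : L) ≠ 0 := by
      intro h0
      rw [CharP.cast_eq_zero_iff L p] at h0
      exact absurd (Nat.le_of_dvd hdpos h0) (not_le.2 hlt)
    have hyL : y = algebraMap L M ((-q.nextCoeff - n) / q.natDegree) := by
      have hd' : (q.natDegree : M) ≠ 0 := by
        have := (map_ne_zero (algebraMap L M)).2 hd
        simpa using this
      rw [map_div₀, map_sub, map_neg, hsum]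
      simp only [map_natCast]
      rw [eq_div_iff hd']
      ring
    rw [hyL] at hy'
    apply h _ ((algebraMap L M).injective _)
    · exact ((-q.nextCoeff - n) / q.natDegree)
    · simpa using hy'
  · have := eq_of_monic_of_dvd_of_natDegree_le hqm (as_monic p a) hqf (by rw [as_natDegree, heq])
    rw [this]; exact hq

theorem as_root : (AdjoinRoot.root (X ^ p - X - C a : L[X])) ^ p -
    AdjoinRoot.root (X ^ p - X - C a : L[X]) = AdjoinRoot.of _ a := by
  have := AdjoinRoot.eval₂_root (X ^ p - X - C a : L[X])
  simpa [sub_eq_zero] using this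

theorem as_splits {M : Type*} [Field M] [CharP M p] [Algebra L M] (y : M)
    (hy : y ^ p - y = algebraMap L M a) :
    Splits ((X ^ p - X - C a : L[X]).map (algebraMap L M)) := by
  classical
  have hm := (as_monic p a).map (algebraMap L M)
  rw [splits_iff_card_roots]
  apply le_antisymm (card_roots' _)
  rw [natDegree_map, as_natDegree]
  have : ((Finset.range p).image (fun n : ℕ => y + (n : M))).val ≤
      ((X ^ p - X - C a : L[X]).map (algebraMap L M)).roots := by
    rw [Finset.val_le_iff_val_subset]
    intro z hz
    rw [Finset.mem_val, Finset.mem_image] at hz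
    obtain ⟨n, -, rfl⟩ := hz
    rw [mem_roots hm.ne_zero]
    simp only [Polynomial.map_sub, Polynomial.map_pow, map_X, map_C, IsRoot.def, eval_sub,
      eval_pow, eval_X, eval_C, add_pow_char, as_nat_pow]
    linear_combination hy
  have h2 := Multiset.card_le_card this
  rwa [Finset.card_val, as_card] at h2

theorem as_galois [Fact (Irreducible (X ^ p - X - C a : L[X]))] :
    IsGalois L (AdjoinRoot (X ^ p - X - C a : L[X])) := by
  have : CharP (AdjoinRoot (X ^ p - X - C a : L[X])) p :=
    charP_of_injective_algebraMap (algebraMap L _).injective p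
  have : IsSplittingField L (AdjoinRoot (X ^ p - X - C a : L[X])) (X ^ p - X - C a : L[X]) := by
    refine ⟨as_splits p a (AdjoinRoot.root _) (as_root p a), ?_⟩
    rw [eq_top_iff, ← AdjoinRoot.adjoinRoot_eq_top]
    apply Algebra.adjoin_mono
    rw [Set.singleton_subset_iff, mem_rootSet]
    refine ⟨(as_monic p a).ne_zero, ?_⟩
    rw [AdjoinRoot.aeval_eq, AdjoinRoot.mk_self]
  apply IsGalois.of_separable_splitting_field (p := (X ^ p - X - C a : L[X]))
  rw [separable_def]
  have : derivative (X ^ p - X - C a : L[X]) = -1 := by simp [derivative_X_pow]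
  rw [this]
  exact isCoprime_one_right.neg_right

theorem as_finrank : Module.finrank L (AdjoinRoot (X ^ p - X - C a : L[X])) = p := by
  rw [PowerBasis.finrank (AdjoinRoot.powerBasis (as_monic p a).ne_zero),
    AdjoinRoot.powerBasis_dim, as_natDegree]

/-- If `z` in the Artin-Schreier extension of `a` satisfies `z ^ p - z = b`, then
`b` is a multiple of `a` up to `c ^ p - c`. -/
theorem as_compare (f : L[X]) (hf : f = X ^ p - X - C a) (h : Irreducible f) (b : L)
    (z : AdjoinRoot f) (hz : z ^ p - z = AdjoinRoot.of f b) :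
    ∃ (j : ℕ) (c : L), c ^ p - c = b - j * a := by
  classical
  have : Fact (Irreducible f) := ⟨h⟩
  have hmon : f.Monic := hf ▸ as_monic p a
  have : CharP (AdjoinRoot f) p :=
    charP_of_injective_algebraMap (algebraMap L _).injective p
  have hy := as_root p a
  rw [← hf] at hy
  set y := AdjoinRoot.root f with hydef
  let g : AdjoinRoot f →+* AdjoinRoot f := AdjoinRoot.lift (AdjoinRoot.of f) (y + 1) (by
    simp only [hf, eval₂_sub, eval₂_pow, eval₂_X, eval₂_C, add_pow_char, one_pow]
    linear_combination hy)
  have gof : ∀ x, g (AdjoinRoot.of f x) = AdjoinRoot.of f x := fun x => AdjoinRoot.lift_of _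
  have gy : g y = y + 1 := AdjoinRoot.lift_root _
  obtain ⟨j, hj⟩ := as_fixed p (g z - z) (by
    have := congrArg g hz
    rw [gof, map_sub, map_pow] at this
    rw [sub_pow_char]
    linear_combination this - hz)
  obtain ⟨w, hw⟩ : ∃ w : AdjoinRoot f, w = z - j * y := ⟨_, rfl⟩
  have hgw : g w = w := by
    rw [hw, map_sub, map_mul, map_natCast, gy]
    linear_combination hj
  obtain ⟨r0, hr0⟩ := AdjoinRoot.mk_surjective w
  obtain ⟨r, hr, hdeg⟩ : ∃ r : L[X], AdjoinRoot.mk f r = w ∧ r.degree < f.degree := by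
    refine ⟨r0 %ₘ f, ?_, degree_modByMonic_lt _ hmon⟩
    rw [← hr0, AdjoinRoot.mk_eq_mk]
    have := modByMonic_add_div r0 f
    exact ⟨-(r0 /ₘ f), by linear_combination this⟩
  have hcomp : AdjoinRoot.mk f (r.comp (X + 1)) = g w := by
    rw [← hr]
    have h1 : (AdjoinRoot.mk f).comp (compRingHom (X + 1)) = g.comp (AdjoinRoot.mk f) := by
      apply Polynomial.ringHom_ext
      · intro x
        simp [gof]
      · simp [← hydef, gy]
    simpa using RingHom.congr_fun h1 r
  have hrr : r.comp (X + 1) = r := by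
    rw [hgw, ← hr, AdjoinRoot.mk_eq_mk] at hcomp
    rw [← sub_eq_zero]
    apply eq_zero_of_dvd_of_degree_lt hcomp
    refine (degree_sub_le _ _).trans_lt (max_lt ?_ hdeg)
    have := degree_taylor r (1 : L)
    rw [taylor_apply, map_one] at this
    rwa [this]
  have hev : ∀ n : ℕ, r.eval (n : L) = r.eval 0 := by
    intro n
    induction n with
    | zero => simp
    | succ n ih =>
      rw [← ih]
      conv_rhs => rw [← hrr]
      simp
  have hrc : r - C (r.eval 0) = 0 := by
    apply eq_zero_of_natDegree_lt_card_of_eval_eq_zero' _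
      ((Finset.range p).image (fun n : ℕ => (0 : L) + (n : L)))
    · intro i hi
      simp only [zero_add, Finset.mem_image] at hi
      obtain ⟨n, -, rfl⟩ := hi
      simp [hev n]
    · rw [as_card, natDegree_sub_C]
      have h2 : f.natDegree = p := hf ▸ as_natDegree p a
      rw [← h2]
      by_cases hr0 : r = 0
      · rw [hr0, h2]; simpa using hp.out.pos
      · exact natDegree_lt_natDegree hr0 hdeg
  refine ⟨j, r.eval 0, ?_⟩
  have hwc : w = AdjoinRoot.of f (r.eval 0) := by
    rw [← hr]
    conv_lhs => rw [sub_eq_zero.1 hrc]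
    simp
  apply (AdjoinRoot.of f).injective
  rw [map_sub, map_pow, ← hwc, hw, sub_pow_char, mul_pow, as_nat_pow]
  simp only [map_sub, map_mul, map_natCast]
  linear_combination hz - (j : AdjoinRoot f) * hy

end Helpers

theorem ls_noroot {K : Type*} [Field K] (p : ℕ) [hp : Fact p.Prime] (b : LaurentSeries K) (c : K)
    (h : b ^ p - b = HahnSeries.single (-1 : ℤ) c) : c = 0 := by
  have hord : (b ^ p).order = p • b.order := HahnSeries.order_pow b p
  have hp2 : (2 : ℤ) ≤ p := by exact_mod_cast hp.out.two_le
  rw [nsmul_eq_mul] at hord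
  rcases lt_or_ge b.order 0 with hneg | hnn
  · exfalso
    have hb : b ≠ 0 := by
      rintro rfl
      simp at hneg
    have hlt : (p : ℤ) * b.order < b.order := by nlinarith
    have h1 := congrArg (fun s : LaurentSeries K => s.coeff ((p : ℤ) * b.order)) h
    simp only [HahnSeries.coeff_sub] at h1
    rw [HahnSeries.coeff_eq_zero_of_lt_order hlt, HahnSeries.coeff_single_of_ne, sub_zero,
      ← hord, HahnSeries.coeff_order_eq_zero] at h1
    · exact hb (pow_eq_zero_iff hp.out.ne_zero |>.1 h1)
    · nlinarith
  · have h1 := congrArg (fun s : LaurentSeries K => s.coeff (-1)) h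
    simp only [HahnSeries.coeff_sub, HahnSeries.coeff_single_same] at h1
    rw [HahnSeries.coeff_eq_zero_of_lt_order (show -1 < (b ^ p).order by rw [hord]; nlinarith),
      HahnSeries.coeff_eq_zero_of_lt_order (show -1 < b.order by omega)] at h1
    simpa using h1.symm

theorem field_amalgam {R A B : Type} [CommRing R] [Field A] [Field B] (f : R →+* A) (g : R →+* B)
    (hf : Function.Injective f) (hg : Function.Injective g) :
    ∃ (K : Type) (_ : Field K) (σ : A →+* K) (τ : B →+* K), ∀ x, σ (f x) = τ (g x) := by
  letI := f.toAlgebra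
  letI := g.toAlgebra
  have := Algebra.TensorProduct.nontrivial_of_algebraMap_injective_of_isDomain R A B hf hg
  obtain ⟨m, hm⟩ := Ideal.exists_maximal (A ⊗[R] B)
  refine ⟨(A ⊗[R] B) ⧸ m, Ideal.Quotient.field m,
    (Ideal.Quotient.mk m).comp (Algebra.TensorProduct.includeLeftRingHom),
    (Ideal.Quotient.mk m).comp
      (Algebra.TensorProduct.includeRight : B →ₐ[R] A ⊗[R] B).toRingHom, ?_⟩
  intro x
  have h1 : (f x) ⊗ₜ[R] (1 : B) = (1 : A) ⊗ₜ[R] g x :=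
    Algebra.TensorProduct.algebraMap_apply' (R := R) (A := A) (B := B) x ▸
      (Algebra.TensorProduct.algebraMap_apply (S := R) (R := R) (A := A) (B := B) x).symm
  simp [h1]

theorem two_embeddings {k₁ k₂ : Type} [Field k₁] [Field k₂] [Algebra k₁ k₂] (α : k₂)
    (hα : Transcendental k₁ α) :
    ∃ (K : Type) (_ : Field K) (σ τ : k₂ →+* K),
      (∀ x : k₁, σ (algebraMap k₁ k₂ x) = τ (algebraMap k₁ k₂ x)) ∧ σ α = τ α + 1 := by
  have hinj : Function.Injective (aeval α : k₁[X] →ₐ[k₁] k₂) :=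
    transcendental_iff_injective.1 hα
  obtain ⟨K, _, σ, τ, h⟩ := field_amalgam (aeval α : k₁[X] →ₐ[k₁] k₂).toRingHom
    ((aeval α : k₁[X] →ₐ[k₁] k₂).toRingHom.comp (taylorAlgHom (1 : k₁)).toRingHom) hinj
    (hinj.comp (taylor_injective 1))
  refine ⟨K, _, σ, τ, fun x => ?_, ?_⟩
  · simpa using h (C x)
  · simpa using h X

theorem lsMap_coeff {R S : Type*} [CommRing R] [CommRing S] (f : R →+* S)
    (x : LaurentSeries R) (n : ℤ) : (lsMap f x).coeff n = f (x.coeff n) := rfl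

theorem lsMap_single {R S : Type*} [CommRing R] [CommRing S] (f : R →+* S) (n : ℤ) (r : R) :
    lsMap f (HahnSeries.single n r) = HahnSeries.single n (f r) := by
  ext m
  by_cases h : m = n
  · subst h; simp [lsMap_coeff]
  · simp [lsMap_coeff, HahnSeries.coeff_single_of_ne h]

theorem lsMap_comp_eq {R S T : Type*} [CommRing R] [CommRing S] [CommRing T] (i : R →+* S)
    (σ τ : S →+* T) (h : ∀ x, σ (i x) = τ (i x)) (x : LaurentSeries R) :
    lsMap σ (lsMap i x) = lsMap τ (lsMap i x) := by
  ext m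
  simp [lsMap_coeff, h]

theorem ls_charP (p : ℕ) (K : Type*) [Field K] [CharP K p] : CharP (LaurentSeries K) p :=
  charP_of_injective_ringHom (f := (HahnSeries.C : K →+* LaurentSeries K))
    (RingHom.injective _) p

theorem tensor_glue {F₁ F₂ E₁ E M : Type} [Field F₁] [Field F₂] [Field E₁] [CommRing E] [CommRing M]
    [Algebra F₁ F₂] [Algebra F₁ E₁] [Algebra F₂ E]
    (e : (E₁ ⊗[F₁] F₂) ≃ₐ[F₂] E) (u : E →+* M) (v : F₂ →+* M)
    (huv : ∀ x : F₁, u (algebraMap F₂ E (algebraMap F₁ F₂ x)) = v (algebraMap F₁ F₂ x)) :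
    ∃ Φ : E →+* M, ∀ x, Φ (algebraMap F₂ E x) = v x := by
  letI : Algebra F₁ M := (v.comp (algebraMap F₁ F₂)).toAlgebra
  let a : E₁ →ₐ[F₁] M :=
    { (u.comp (e : (E₁ ⊗[F₁] F₂) →+* E)).comp
        (Algebra.TensorProduct.includeLeftRingHom) with
      commutes' := by
        intro r
        have h1 : (algebraMap F₁ E₁ r) ⊗ₜ[F₁] (1 : F₂) =
            algebraMap F₂ (E₁ ⊗[F₁] F₂) (algebraMap F₁ F₂ r) := by
          rw [Algebra.TensorProduct.right_algebraMap_apply]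
          exact Algebra.TensorProduct.algebraMap_apply' (R := F₁) (A := E₁) (B := F₂) r ▸
            (Algebra.TensorProduct.algebraMap_apply (S := F₁) (R := F₁)
              (A := E₁) (B := F₂) r).symm
        change u (e ((algebraMap F₁ E₁ r) ⊗ₜ[F₁] (1 : F₂))) = v (algebraMap F₁ F₂ r)
        rw [h1, e.commutes, huv] }
  let b : F₂ →ₐ[F₁] M := { v with commutes' := fun r => rfl }
  let φ := Algebra.TensorProduct.lift a b (fun _ _ => Commute.all _ _)
  refine ⟨φ.toRingHom.comp (e.symm : E →+* (E₁ ⊗[F₁] F₂)), fun x => ?_⟩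
  change φ (e.symm (algebraMap F₂ E x)) = v x
  rw [e.symm.commutes, Algebra.TensorProduct.right_algebraMap_apply,
    Algebra.TensorProduct.lift_tmul, map_one, one_mul]
  rfl

/-- Artin–Schreier extensions of `k₂((t))` given by `Y^p - Y - α/t` with
`α ∈ k₂` transcendental over `k₁` do not descend to any degree `p` extension of
`k₁((t))`. -/
theorem artinSchreier_not_induced_by_any_degree_p
    (p : ℕ) (hp : p.Prime) (k₁ k₂ : Type) [Field k₁] [Field k₂] [CharP k₁ p] [CharP k₂ p]
    [Algebra k₁ k₂] [Algebra.IsSeparable k₁ (algebraicClosure k₁ k₂)]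
    (α : k₂) (hα : Transcendental k₁ α) :
    letI : Algebra (LaurentSeries k₁) (LaurentSeries k₂) :=
      (lsMap (algebraMap k₁ k₂)).toAlgebra
    Irreducible (X ^ p - X - C (HahnSeries.single (-1 : ℤ) α) :
        Polynomial (LaurentSeries k₂)) ∧
    (∀ [Fact (Irreducible (X ^ p - X - C (HahnSeries.single (-1 : ℤ) α) :
        Polynomial (LaurentSeries k₂)))],
      IsGalois (LaurentSeries k₂)
        (AdjoinRoot (X ^ p - X - C (HahnSeries.single (-1 : ℤ) α) :
          Polynomial (LaurentSeries k₂))) ∧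
      Module.finrank (LaurentSeries k₂)
        (AdjoinRoot (X ^ p - X - C (HahnSeries.single (-1 : ℤ) α) :
          Polynomial (LaurentSeries k₂))) = p) ∧
    ¬ ∃ (E₁ : Type) (_ : Field E₁) (_ : Algebra (LaurentSeries k₁) E₁),
        Module.finrank (LaurentSeries k₁) E₁ = p ∧
        Nonempty ((E₁ ⊗[LaurentSeries k₁] LaurentSeries k₂) ≃ₐ[LaurentSeries k₂]
          AdjoinRoot (X ^ p - X - C (HahnSeries.single (-1 : ℤ) α) :
            Polynomial (LaurentSeries k₂))) := by
  have hpf : Fact p.Prime := ⟨hp⟩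
  letI : Algebra (LaurentSeries k₁) (LaurentSeries k₂) :=
      (lsMap (algebraMap k₁ k₂)).toAlgebra
  have := ls_charP p k₂
  have hα0 : α ≠ 0 := by
    rintro rfl
    exact hα isAlgebraic_zero
  refine ⟨as_irreducible p _ (fun b hb => hα0 (ls_noroot p b α hb)), ?_, ?_⟩
  · intro hirr
    exact ⟨as_galois p _, as_finrank p _⟩
  rintro ⟨E₁, _, _, -, ⟨e⟩⟩
  obtain ⟨K, _, σ, τ, hστ, hα1⟩ := two_embeddings α hα
  have : CharP K p := charP_of_injective_ringHom σ.injective p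
  have := ls_charP p K
  have hσ0 : σ α ≠ 0 := (map_ne_zero σ).2 hα0
  obtain ⟨Φ, hΦ⟩ := tensor_glue e
    (AdjoinRoot.map (lsMap σ) (X ^ p - X - C (HahnSeries.single (-1 : ℤ) α))
      (X ^ p - X - C (HahnSeries.single (-1 : ℤ) (σ α))) (by simp [lsMap_single]))
    ((AdjoinRoot.of _).comp (lsMap τ)) (by
      intro x
      rw [AdjoinRoot.algebraMap_eq, AdjoinRoot.map_of]
      exact congrArg (AdjoinRoot.of _) (lsMap_comp_eq (algebraMap k₁ k₂) σ τ hστ x))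
  have hz := congrArg Φ (as_root p (HahnSeries.single (-1 : ℤ) α : LaurentSeries k₂))
  rw [← AdjoinRoot.algebraMap_eq, hΦ, map_sub, map_pow, RingHom.comp_apply, lsMap_single] at hz
  obtain ⟨j, c, hc⟩ := as_compare p (HahnSeries.single (-1 : ℤ) (σ α)) _ rfl
    (as_irreducible p _ (fun b hb => hσ0 (ls_noroot p b _ hb))) _ _ hz
  have hc' : τ α - j * σ α = 0 := by
    apply ls_noroot p c
    rw [hc, ← nsmul_eq_mul, ← nsmul_eq_mul]
    exact ((map_sub (HahnSeries.single.addMonoidHom (-1 : ℤ)) (τ α) (j • σ α)).trans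
      (congrArg _ (map_nsmul (HahnSeries.single.addMonoidHom (-1 : ℤ)) j (σ α)))).symm
  rw [hα1] at hc'
  have hrel : α - j * (α + 1) = 0 := by
    apply τ.injective
    simpa using hc'
  apply hα
  refine ⟨X - C (j : k₁) * (X + 1), ?_, by simpa using hrel⟩
  intro h0
  have e0 := congrArg (eval 0) h0
  have e1 := congrArg (eval (-1)) h0
  simp at e0 e1
end

section
/- Let κ be a field of characteristic 3, let k₂ = κ(u) be the rational function field over κ, and let k₁ = κ(u²) ⊆ k₂. Write F₁ = k₁((t)) ⊆ F₂ = k₂((t)), and let E := F₂[Y]/(Y³ − Y − u·t^{−1}). Then E, regarded as a field extension of F₁ via F₁ ⊆ F₂ ⊆ E, is a Galois field extension of F₁ of degree 6 whose Galois group is isomorphic to the symmetric group S₃ on three letters. -/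
open Polynomial

/-- The subfield `κ(u²)` of the rational function field `κ(u)`. -/
noncomputable def kOne (κ : Type) [Field κ] : IntermediateField κ (RatFunc κ) :=
  IntermediateField.adjoin κ {(RatFunc.X : RatFunc κ) ^ 2}

/-- The polynomial `Y³ - Y - u·t⁻¹` over `F₂ = κ(u)((t))`. -/
noncomputable def fTwo (κ : Type) [Field κ] : Polynomial (LaurentSeries (RatFunc κ)) :=
  X ^ 3 - X - C (HahnSeries.single (-1 : ℤ) (RatFunc.X : RatFunc κ))

theorem aux_main {F₁ F₂ E : Type*} [Field F₁] [Field F₂] [Field E] [Algebra F₁ F₂] [Algebra F₂ E]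
    [Algebra F₁ E] [IsScalarTower F₁ F₂ E] (h3 : (3 : F₁) = 0) (a : F₂) (b : F₁)
    (hab : a ^ 2 = algebraMap F₁ F₂ b) (hb : b ≠ 0)
    (hspan : ∀ x : F₂, ∃ p q : F₁, x = algebraMap F₁ F₂ p + algebraMap F₁ F₂ q * a)
    (y : E) (hy : y ^ 3 - y = algebraMap F₂ E a) (hgen : Algebra.adjoin F₂ {y} = ⊤)
    (hfin : Module.finrank F₁ E = 6) :
    IsGalois F₁ E ∧ Nonempty ((E ≃ₐ[F₁] E) ≃* Equiv.Perm (Fin 3)) := by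
  have h3E : (3 : E) = 0 := by
    have := congrArg (algebraMap F₁ E) h3
    rwa [map_ofNat, map_zero] at this
  have hyb : (y ^ 3 - y) ^ 2 = algebraMap F₁ E b := by
    rw [hy, ← map_pow, hab, ← IsScalarTower.algebraMap_apply]
  set h : F₁[X] := X ^ 3 - 2 * X ^ 2 + X - C b with hh
  have h3P : (3 : F₁[X]) = 0 := by
    have := congrArg (C : F₁ →+* F₁[X]) h3
    rwa [map_ofNat, map_zero] at this
  have h3Q : (3 : E[X]) = 0 := by
    have := congrArg (C : E →+* E[X]) h3E
    rwa [map_ofNat, map_zero] at this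
  have hdeg : h.natDegree = 3 := by
    rw [hh]
    have : (X ^ 3 - 2 * X ^ 2 + X - C b : F₁[X]) = X ^ 3 - C 2 * X ^ 2 + X - C b := by
      rw [map_ofNat C 2]
    rw [this]
    compute_degree!
  have hsep : h.Separable := by
    have hder : derivative h = 1 - X := by
      rw [hh]
      simp
      try rw [map_ofNat C 2]
      linear_combination (X ^ 2 - X) * h3P
    refine ⟨-C b⁻¹, C b⁻¹ * X * (1 - X), ?_⟩
    rw [hder, hh]
    have : (C b⁻¹ : F₁[X]) * C b = 1 := by rw [← C_mul, inv_mul_cancel₀ hb, C_1]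
    linear_combination this
  have hmap : h.map (algebraMap F₁ E) =
      (X - C (y ^ 2)) * (X - C ((y + 1) ^ 2)) * (X - C ((y - 1) ^ 2)) := by
    rw [hh]
    simp only [Polynomial.map_sub, Polynomial.map_add, Polynomial.map_mul, Polynomial.map_pow,
      map_X, map_C, ← hyb, Polynomial.map_ofNat]
    simp only [map_pow, map_sub, map_add, map_one]
    linear_combination ((C y) ^ 2 * X ^ 2 - (C y) ^ 4 * X) * h3Q
  have hsplit : (h.map (algebraMap F₁ E)).Splits := by
    rw [hmap]
    exact ((Splits.X_sub_C _).mul (Splits.X_sub_C _)).mul (Splits.X_sub_C _)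
  have hne : h ≠ 0 := by
    intro h0
    rw [h0] at hdeg
    simp at hdeg
  have hr1 : y ^ 2 ∈ h.rootSet E := by
    rw [mem_rootSet']
    refine ⟨(Polynomial.map_ne_zero hne), ?_⟩
    rw [aeval_def, ← eval_map, hmap]; simp
  have hr2 : (y + 1) ^ 2 ∈ h.rootSet E := by
    rw [mem_rootSet']
    refine ⟨(Polynomial.map_ne_zero hne), ?_⟩
    rw [aeval_def, ← eval_map, hmap]; simp
  have hyS : y ∈ Algebra.adjoin F₁ (h.rootSet E) := by
    have : y = y ^ 2 - (y + 1) ^ 2 + 1 := by linear_combination y * h3E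
    rw [this]
    exact add_mem (sub_mem (Algebra.subset_adjoin hr1) (Algebra.subset_adjoin hr2)) (one_mem _)
  have hF2 : ∀ x : F₂, algebraMap F₂ E x ∈ Algebra.adjoin F₁ (h.rootSet E) := by
    intro x
    obtain ⟨p, q, rfl⟩ := hspan x
    rw [map_add, map_mul, ← hy, ← IsScalarTower.algebraMap_apply, ← IsScalarTower.algebraMap_apply]
    exact add_mem (Subalgebra.algebraMap_mem _ _) (mul_mem (Subalgebra.algebraMap_mem _ _)
      (sub_mem (pow_mem hyS 3) hyS))
  haveI : h.IsSplittingField F₁ E := by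
    refine ⟨hsplit, ?_⟩
    rw [eq_top_iff]
    rintro x -
    have hx : x ∈ Algebra.adjoin F₂ {y} := by rw [hgen]; trivial
    induction hx using Algebra.adjoin_induction with
    | mem x hx => rw [Set.mem_singleton_iff.1 hx]; exact hyS
    | algebraMap r => exact hF2 r
    | add x z _ _ hx hz => exact add_mem hx hz
    | mul x z _ _ hx hz => exact mul_mem hx hz
  haveI : FiniteDimensional F₁ E := Module.finite_of_finrank_pos (by omega)
  haveI hgal : IsGalois F₁ E := IsGalois.of_separable_splitting_field hsep
  refine ⟨hgal, ?_⟩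
  have hcard : Nat.card (E ≃ₐ[F₁] E) = 6 := by rw [IsGalois.card_aut_eq_finrank, hfin]
  haveI : Fact ((h.map (algebraMap F₁ E)).Splits) := ⟨hsplit⟩
  let e1 : (E ≃ₐ[F₁] E) ≃* h.Gal := AlgEquiv.autCongr (IsSplittingField.algEquiv E h)
  have hroots : Fintype.card (h.rootSet E) = 3 := by
    rw [card_rootSet_eq_natDegree hsep hsplit, hdeg]
  let e2 : h.rootSet E ≃ Fin 3 := Fintype.equivFinOfCardEq hroots
  let e3 : Equiv.Perm (h.rootSet E) ≃* Equiv.Perm (Fin 3) := e2.permCongrHom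
  let φ : (E ≃ₐ[F₁] E) →* Equiv.Perm (Fin 3) :=
    e3.toMonoidHom.comp ((Gal.galActionHom h E).comp e1.toMonoidHom)
  have hinj : Function.Injective φ :=
    e3.injective.comp ((Gal.galActionHom_injective h E).comp e1.injective)
  have hbij : Function.Bijective φ := by
    rw [Nat.bijective_iff_injective_and_card]
    refine ⟨hinj, ?_⟩
    rw [hcard, Nat.card_eq_fintype_card, Fintype.card_perm]
    rfl
  exact ⟨MulEquiv.ofBijective φ hbij⟩

theorem aux_natDegree (κ : Type) [Field κ] : (fTwo κ).natDegree = 3 := by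
  unfold fTwo
  compute_degree!

theorem aux_irred (κ : Type) [Field κ] : Irreducible (fTwo κ) := by
  apply irreducible_of_degree_le_three_of_not_isRoot
  · rw [aux_natDegree]; decide
  intro r hr
  have hr' : r ^ 3 - r = HahnSeries.single (-1 : ℤ) (RatFunc.X : RatFunc κ) := by
    have := hr.eq_zero
    simp only [fTwo, eval_sub, eval_pow, eval_X, eval_C] at this
    exact sub_eq_zero.1 this
  have hord : (r ^ 3).order = 3 * r.order := by
    rw [HahnSeries.order_pow]; simp
  rcases lt_or_ge r.order 0 with hn | hn
  · have hr0 : r ≠ 0 := by rintro rfl; simp at hn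
    have h := congrArg (fun s => HahnSeries.coeff s (3 * r.order)) hr'
    simp only [HahnSeries.coeff_sub] at h
    rw [HahnSeries.coeff_eq_zero_of_lt_order (by omega : 3 * r.order < r.order),
      HahnSeries.coeff_single_of_ne (by omega), sub_zero, ← hord,
      HahnSeries.coeff_order_eq_zero] at h
    exact hr0 (pow_eq_zero_iff (by norm_num) |>.1 h)
  · have h := congrArg (fun s => HahnSeries.coeff s (-1)) hr'
    simp only [HahnSeries.coeff_sub, HahnSeries.coeff_single_same] at h
    rw [HahnSeries.coeff_eq_zero_of_lt_order (by omega : -1 < r.order),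
      HahnSeries.coeff_eq_zero_of_lt_order (by omega : -1 < (r ^ 3).order)] at h
    exact RatFunc.X_ne_zero (by simpa using h.symm)

theorem aux_finrank_k (κ : Type) [Field κ] : Module.finrank (kOne κ) (RatFunc κ) = 2 := by
  have h := RatFunc.finrank_eq_max_natDegree ((RatFunc.X : RatFunc κ) ^ 2)
  have e : (RatFunc.X : RatFunc κ) ^ 2 = algebraMap κ[X] (RatFunc κ) (X ^ 2) := by simp
  have : max ((RatFunc.X : RatFunc κ) ^ 2).num.natDegree
    ((RatFunc.X : RatFunc κ) ^ 2).denom.natDegree = 2 := by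
    rw [e, RatFunc.num_algebraMap, RatFunc.denom_algebraMap]; simp
  rw [this] at h
  exact h

theorem aux_X_notMem (κ : Type) [Field κ] : (RatFunc.X : RatFunc κ) ∉ kOne κ := by
  intro h
  have ht : kOne κ = ⊤ := by
    rw [eq_top_iff, ← RatFunc.adjoin_X (K := κ)]
    exact IntermediateField.adjoin_simple_le_iff.2 h
  have := aux_finrank_k κ
  rw [ht, IntermediateField.finrank_top] at this
  omega

theorem aux_indep (κ : Type) [Field κ] :
    LinearIndependent (kOne κ) ![(1 : RatFunc κ), RatFunc.X] := by
  rw [LinearIndependent.pair_iff' one_ne_zero]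
  intro c hc
  apply aux_X_notMem κ
  rw [← hc]
  simp [Algebra.smul_def]

theorem aux_lin (κ : Type) [Field κ] : ∃ P Q : RatFunc κ →ₗ[kOne κ] kOne κ,
    ∀ z, z = algebraMap (kOne κ) (RatFunc κ) (P z) +
      algebraMap (kOne κ) (RatFunc κ) (Q z) * RatFunc.X := by
  let B := basisOfLinearIndependentOfCardEqFinrank (aux_indep κ) (by simp [aux_finrank_k])
  refine ⟨B.coord 0, B.coord 1, fun z => ?_⟩
  have := B.sum_repr z
  rw [Fin.sum_univ_two] at this
  simp [B, Algebra.smul_def] at this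
  simpa [B] using this.symm

theorem aux_span (κ : Type) [Field κ] (x : LaurentSeries (RatFunc κ)) :
    ∃ p q : LaurentSeries (kOne κ), x = lsMap (algebraMap (kOne κ) (RatFunc κ)) p +
      lsMap (algebraMap (kOne κ) (RatFunc κ)) q *
        HahnSeries.single (-1 : ℤ) (RatFunc.X : RatFunc κ) := by
  obtain ⟨P, Q, h⟩ := aux_lin κ
  refine ⟨x.map P, x.map Q * HahnSeries.single 1 1, ?_⟩
  have e : lsMap (algebraMap (kOne κ) (RatFunc κ)) (HahnSeries.single 1 1) =
      HahnSeries.single 1 1 := by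
    ext n
    change algebraMap (kOne κ) (RatFunc κ) _ = _
    by_cases hn : n = 1
    · subst hn; simp
    · rw [HahnSeries.coeff_single_of_ne hn, HahnSeries.coeff_single_of_ne hn]; simp
  rw [map_mul, e, mul_assoc, HahnSeries.single_mul_single]
  ext n
  have : (1 : ℤ) + -1 = 0 := by norm_num
  rw [this, HahnSeries.coeff_add, mul_comm, HahnSeries.coeff_single_zero_mul, one_mul, mul_comm]
  exact h _

theorem aux_notRange (κ : Type) [Field κ] (c : LaurentSeries (kOne κ)) :
    lsMap (algebraMap (kOne κ) (RatFunc κ)) c ≠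
        HahnSeries.single (-1 : ℤ) (RatFunc.X : RatFunc κ) := by
  intro h
  have := congrArg (fun s => HahnSeries.coeff s (-1)) h
  simp only [HahnSeries.coeff_single_same] at this
  apply aux_X_notMem κ
  rw [← this]
  exact (c.coeff (-1)).2

theorem aux_sq (κ : Type) [Field κ] : ∃ b : LaurentSeries (kOne κ),
    (HahnSeries.single (-1 : ℤ) (RatFunc.X : RatFunc κ)) ^ 2 =
      lsMap (algebraMap (kOne κ) (RatFunc κ)) b := by
  let v : kOne κ := ⟨RatFunc.X ^ 2, IntermediateField.mem_adjoin_simple_self _ _⟩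
  refine ⟨HahnSeries.single (-2) v, ?_⟩
  rw [pow_two, HahnSeries.single_mul_single]
  ext n
  change _ = algebraMap (kOne κ) (RatFunc κ) _
  by_cases hn : n = -2
  · subst hn
    rw [HahnSeries.coeff_single_same, show (-1 : ℤ) + -1 = -2 by norm_num,
      HahnSeries.coeff_single_same, ← pow_two]
    rfl
  · rw [HahnSeries.coeff_single_of_ne hn, HahnSeries.coeff_single_of_ne (by omega)]; simp

theorem aux_finrank2 {F₁ F₂ : Type*} [Field F₁] [Field F₂] [Algebra F₁ F₂] (a : F₂)
    (hspan : ∀ x : F₂, ∃ p q : F₁, x = algebraMap F₁ F₂ p + algebraMap F₁ F₂ q * a)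
    (hr : ∀ c, algebraMap F₁ F₂ c ≠ a) : Module.finrank F₁ F₂ = 2 := by
  have hli : LinearIndependent F₁ ![1, a] := by
    rw [LinearIndependent.pair_iff' one_ne_zero]
    intro c hc
    apply hr c
    rw [← hc]
    simp [Algebra.smul_def]
  have hsp : ⊤ ≤ Submodule.span F₁ (Set.range ![1, a]) := by
    rintro x -
    obtain ⟨p, q, rfl⟩ := hspan x
    simp only [Matrix.range_cons, Matrix.range_empty, Set.union_empty, Set.singleton_union]
    rw [Submodule.mem_span_pair]
    exact ⟨p, q, by simp [Algebra.smul_def]⟩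
  rw [Module.finrank_eq_card_basis (Module.Basis.mk hli hsp)]
  simp

set_option maxHeartbeats 1000000 in
/-- With `char κ = 3`, `F₁ = κ(u²)((t)) ⊆ F₂ = κ(u)((t))`, the field
`E = F₂[Y]/(Y³ - Y - u·t⁻¹)`, viewed over `F₁`, is Galois of degree 6 with Galois
group the symmetric group `S₃`. -/
theorem artinSchreier_example_galois_S3
    (κ : Type) [Field κ] [CharP κ 3] :
    Irreducible (fTwo κ) ∧
    ∀ [Fact (Irreducible (fTwo κ))],
      letI : Algebra (LaurentSeries (kOne κ)) (AdjoinRoot (fTwo κ)) :=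
        ((algebraMap (LaurentSeries (RatFunc κ)) (AdjoinRoot (fTwo κ))).comp
          (lsMap (algebraMap (kOne κ) (RatFunc κ)))).toAlgebra
      IsGalois (LaurentSeries (kOne κ)) (AdjoinRoot (fTwo κ)) ∧
      Module.finrank (LaurentSeries (kOne κ)) (AdjoinRoot (fTwo κ)) = 6 ∧
      Nonempty ((AdjoinRoot (fTwo κ) ≃ₐ[LaurentSeries (kOne κ)] AdjoinRoot (fTwo κ))
        ≃* Equiv.Perm (Fin 3)) := by
  refine ⟨aux_irred κ, ?_⟩
  intro _
  letI i1 : Algebra (LaurentSeries (kOne κ)) (LaurentSeries (RatFunc κ)) :=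
    (lsMap (algebraMap (kOne κ) (RatFunc κ))).toAlgebra
  letI i2 : Algebra (LaurentSeries (kOne κ)) (AdjoinRoot (fTwo κ)) :=
    ((algebraMap (LaurentSeries (RatFunc κ)) (AdjoinRoot (fTwo κ))).comp
      (lsMap (algebraMap (kOne κ) (RatFunc κ)))).toAlgebra
  haveI : @IsScalarTower (LaurentSeries (kOne κ)) (LaurentSeries (RatFunc κ))
      (AdjoinRoot (fTwo κ)) i1.toSMul Algebra.toSMul i2.toSMul := IsScalarTower.of_algebraMap_eq (fun _ => rfl)
  obtain ⟨b, hb⟩ := aux_sq κ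
  have hne : fTwo κ ≠ 0 := (aux_irred κ).ne_zero
  have hfin : Module.finrank (LaurentSeries (kOne κ)) (AdjoinRoot (fTwo κ)) = 6 := by
    rw [← Module.finrank_mul_finrank (LaurentSeries (kOne κ)) (LaurentSeries (RatFunc κ))
      (AdjoinRoot (fTwo κ)), aux_finrank2 _ (aux_span κ) (aux_notRange κ),
      (AdjoinRoot.powerBasis hne).finrank, AdjoinRoot.powerBasis_dim, aux_natDegree]
  have h3 : (3 : LaurentSeries (kOne κ)) = 0 := by
    have h : (3 : κ) = 0 := by exact_mod_cast CharP.cast_eq_zero κ 3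
    have := congrArg (HahnSeries.C (Γ := ℤ)) (congrArg (algebraMap κ (kOne κ)) h)
    rwa [map_ofNat, map_ofNat, map_zero, map_zero] at this
  have hb0 : b ≠ 0 := by
    rintro rfl
    rw [map_zero] at hb
    have := pow_eq_zero_iff (by norm_num) |>.1 hb
    exact RatFunc.X_ne_zero (HahnSeries.single_eq_zero_iff.1 this)
  have hy : (AdjoinRoot.root (fTwo κ)) ^ 3 - AdjoinRoot.root (fTwo κ) =
      algebraMap (LaurentSeries (RatFunc κ)) (AdjoinRoot (fTwo κ))
        (HahnSeries.single (-1 : ℤ) (RatFunc.X : RatFunc κ)) := by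
    have := AdjoinRoot.eval₂_root (fTwo κ)
    rw [fTwo, eval₂_sub, eval₂_sub, eval₂_pow, eval₂_X, eval₂_C] at this
    exact sub_eq_zero.1 this
  obtain ⟨hg, he⟩ := aux_main h3 _ b hb hb0 (aux_span κ) _ hy AdjoinRoot.adjoinRoot_eq_top hfin
  exact ⟨hg, hfin, he⟩
end

section
/- Let L ⊆ E be a field extension, let Ω be a separable closure of E, let L^sep be the separable closure of L in Ω, and let φ : Aut_E(Ω) → Aut_L(L^sep) be the restriction homomorphism. Then φ is surjective if and only if L is separably closed in E, i.e., every element of E that is separable algebraic over L lies in the image of L. -/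
variable (L E Ω : Type) [Field L] [Field E] [Field Ω]
  [Algebra L E] [Algebra E Ω] [Algebra L Ω] [IsScalarTower L E Ω]

/-- The restriction homomorphism `Aut_E(Ω) → Aut_L(L^sep)`, where `L^sep` is the
separable closure of `L` in `Ω`. -/
noncomputable def restrictionHom :
    (Ω ≃ₐ[E] Ω) →* (separableClosure L Ω ≃ₐ[L] separableClosure L Ω) where
  toFun σ := separableClosure.algEquivOfAlgEquiv (σ.restrictScalars L)
  map_one' := by
    ext x
    rfl
  map_mul' σ τ := by
    ext x
    rfl

theorem restrictionHom_coe (σ : Ω ≃ₐ[E] Ω) (x : separableClosure L Ω) :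
    ((restrictionHom L E Ω σ x : separableClosure L Ω) : Ω) = σ x := rfl

theorem restrictionHom_continuous [Algebra.IsIntegral E Ω] :
    Continuous (restrictionHom L E Ω) := by
  apply continuous_of_continuousAt_one
  rw [ContinuousAt, map_one]
  intro s hs
  rw [krullTopology_mem_nhds_one_iff] at hs
  obtain ⟨K, hK, hs⟩ := hs
  obtain ⟨S, hS⟩ := (IntermediateField.essFiniteType_iff.1 (inferInstance : Algebra.EssFiniteType L K))
  rw [Filter.mem_map, krullTopology_mem_nhds_one_iff]
  let M : IntermediateField E Ω :=
    IntermediateField.adjoin E ((fun x : separableClosure L Ω => (x : Ω)) '' (S : Set _))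
  have hfin : FiniteDimensional E M :=
    have : Finite ((fun x : separableClosure L Ω => (x : Ω)) '' (S : Set _)) :=
      (S.finite_toSet.image _).to_subtype
    IntermediateField.finiteDimensional_adjoin fun x _ => Algebra.IsIntegral.isIntegral x
  refine ⟨M, hfin, ?_⟩
  intro σ hσ
  apply hs
  have key : M.fixingSubgroup.map (restrictionHom L E Ω) ≤ K.fixingSubgroup := by
    rw [← IntermediateField.le_iff_le, ← hS, IntermediateField.adjoin_le_iff]
    intro x hx
    rw [SetLike.mem_coe, IntermediateField.mem_fixedField_iff]
    rintro _ ⟨τ, hτ, rfl⟩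
    apply Subtype.ext
    rw [restrictionHom_coe]
    exact (IntermediateField.mem_fixingSubgroup_iff _ _).1 hτ _
      (IntermediateField.subset_adjoin _ _ ⟨x, hx, rfl⟩)
  exact key ⟨σ, hσ, rfl⟩

/-- The restriction map `Aut_E(Ω) → Aut_L(L^sep)` is surjective if and only if `L` is
separably closed in `E`. -/
theorem surjective_restrictionHom_iff [IsSepClosure E Ω] :
    Function.Surjective (restrictionHom L E Ω) ↔
      ∀ x : E, IsAlgebraic L x → IsSeparable L x → x ∈ (algebraMap L E).range := by
  have hsc : IsSepClosed Ω := IsSepClosure.sep_closed E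
  have hgal : IsGalois E Ω := inferInstance
  have hgal' : IsGalois L (separableClosure L Ω) := inferInstance
  constructor
  · intro hsurj x _ hx
    have hx' : algebraMap E Ω x ∈ separableClosure L Ω :=
      (map_mem_separableClosure_iff (IsScalarTower.toAlgHom L E Ω)).2
        (mem_separableClosure_iff.2 hx)
    have h := (InfiniteGalois.mem_range_algebraMap_iff_fixed (k := L)
      (⟨_, hx'⟩ : separableClosure L Ω)).2 (by
        intro f
        obtain ⟨σ, rfl⟩ := hsurj f
        apply Subtype.ext
        rw [restrictionHom_coe]
        exact σ.commutes x)
    obtain ⟨y, hy⟩ := h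
    refine ⟨y, (algebraMap E Ω).injective ?_⟩
    rw [← IsScalarTower.algebraMap_apply]
    exact congrArg Subtype.val hy
  · intro h
    have hclosed : IsClosed ((restrictionHom L E Ω).range : Set (separableClosure L Ω ≃ₐ[L] separableClosure L Ω)) := by
      rw [MonoidHom.coe_range]
      exact (isCompact_range (restrictionHom_continuous L E Ω)).isClosed
    have hfix := InfiniteGalois.fixingSubgroup_fixedField
      (⟨(restrictionHom L E Ω).range, hclosed⟩ : ClosedSubgroup _)
    have hbot : IntermediateField.fixedField (restrictionHom L E Ω).range = ⊥ := by
      rw [eq_bot_iff]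
      intro x hx
      rw [IntermediateField.mem_fixedField_iff] at hx
      obtain ⟨y, hy⟩ := (InfiniteGalois.mem_range_algebraMap_iff_fixed (k := E) (x : Ω)).2
        (fun σ => congrArg Subtype.val (hx _ ⟨σ, rfl⟩))
      have hys : IsSeparable L y := by
        rw [← mem_separableClosure_iff,
          ← map_mem_separableClosure_iff (IsScalarTower.toAlgHom L E Ω)]
        exact hy ▸ x.2
      obtain ⟨z, rfl⟩ := h y hys.isIntegral.isAlgebraic hys
      rw [IntermediateField.mem_bot]
      refine ⟨z, Subtype.ext ?_⟩
      rw [← hy, ← IsScalarTower.algebraMap_apply]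
      rfl
    rw [← MonoidHom.range_eq_top]
    change (IntermediateField.fixedField (restrictionHom L E Ω).range).fixingSubgroup =
      (restrictionHom L E Ω).range at hfix
    rw [← hfix, hbot, IntermediateField.fixingSubgroup_bot]
end
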